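/- Let d ≥ 2 be an integer, let μ be the normalized Haar probability measure on U(d), and let S denote the swap operator on ℂ^d ⊗ ℂ^d (S(u⊗v) = v⊗u). Then for every d²×d² complex matrix M (indexed by Fin d × Fin d), ∫_{U(d)} (U ⊗ U) M (U ⊗ U)ᴴ dμ(U) = α·I + β·S, where α = (d·tr(M) − tr(S·M)) / (d(d²−1)) and β = (d·tr(S·M) − tr(M)) / (d(d²−1)). (Second-moment Haar twirl / two-fold Schur–Weyl projection formula.) -/

import Mathlib

open MeasureTheory Matrix
open scoped Kronecker

attribute [local instance] Matrix.normedAddCommGroup Matrix.normedSpace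

noncomputable instance {n : Type*} [Fintype n] [DecidableEq n] :
    MeasurableSpace (Matrix.unitaryGroup n ℂ) := borel _

instance {n : Type*} [Fintype n] [DecidableEq n] :
    BorelSpace (Matrix.unitaryGroup n ℂ) := ⟨rfl⟩

/-- The swap operator `S` on `ℂ^d ⊗ ℂ^d`: `S((i,j),(k,l)) = 1` iff `i = l` and `j = k`. -/
noncomputable def swapOp (d : ℕ) : Matrix (Fin d × Fin d) (Fin d × Fin d) ℂ :=
  fun p q => if p.1 = q.2 ∧ p.2 = q.1 then 1 else 0


lemma kron_conj {d : ℕ} (T : Matrix (Fin d × Fin d) (Fin d × Fin d) ℂ)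
    (V : Matrix (Fin d) (Fin d) ℂ) (h : (V ⊗ₖ V) * T = T * (V ⊗ₖ V)) (i j k l : Fin d) :
    ∑ a, ∑ b, V i a * V j b * T (a, b) (k, l) = ∑ a, ∑ b, T (i, j) (a, b) * (V a k * V b l) := by
  have := congrFun (congrFun h (i, j)) (k, l)
  simpa only [Matrix.mul_apply, Fintype.sum_prod_type, Matrix.kroneckerMap_apply] using this

lemma comm_diag {d : ℕ} (T : Matrix (Fin d × Fin d) (Fin d × Fin d) ℂ)
    (h : ∀ V ∈ Matrix.unitaryGroup (Fin d) ℂ, (V ⊗ₖ V) * T = T * (V ⊗ₖ V)) (v : Fin d → ℂ)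
    (hv : ∀ i, v i * star (v i) = 1) (i j k l : Fin d) :
    v i * v j * T (i, j) (k, l) = T (i, j) (k, l) * (v k * v l) := by
  have := kron_conj T (Matrix.diagonal v) (h _ (by
    rw [Matrix.mem_unitaryGroup_iff, Matrix.star_eq_conjTranspose, Matrix.diagonal_conjTranspose,
      Matrix.diagonal_mul_diagonal, ← Matrix.diagonal_one]
    congr 1
    funext i
    exact hv i)) i j k l
  simpa [Matrix.diagonal_apply, Finset.sum_ite_eq, ite_mul, mul_ite] using this

lemma comm_perm {d : ℕ} (T : Matrix (Fin d × Fin d) (Fin d × Fin d) ℂ)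
    (h : ∀ V ∈ Matrix.unitaryGroup (Fin d) ℂ, (V ⊗ₖ V) * T = T * (V ⊗ₖ V))
    (s : Equiv.Perm (Fin d)) (i j k l : Fin d) :
    T (s i, s j) (s k, s l) = T (i, j) (k, l) := by
  have := kron_conj T (Matrix.of fun a b => if b = s a then 1 else 0) (h _ (by
    rw [Matrix.mem_unitaryGroup_iff, Matrix.star_eq_conjTranspose]
    ext a b
    simp [Matrix.mul_apply, Matrix.one_apply, Matrix.conjTranspose_apply, eq_comm])) i j (s k) (s l)
  simpa [ite_mul, mul_ite] using this

lemma supp_T {d : ℕ} (T : Matrix (Fin d × Fin d) (Fin d × Fin d) ℂ)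
    (h : ∀ V ∈ Matrix.unitaryGroup (Fin d) ℂ, (V ⊗ₖ V) * T = T * (V ⊗ₖ V))
    (i j k l : Fin d) (hne : ¬ ((i = k ∧ j = l) ∨ (i = l ∧ j = k))) : T (i, j) (k, l) = 0 := by
  by_contra h0
  have key : ∀ m : Fin d, (if i = m then Complex.I else 1) * (if j = m then Complex.I else 1)
      = (if k = m then Complex.I else 1) * (if l = m then Complex.I else 1) := by
    intro m
    have := comm_diag T h (fun a => if a = m then Complex.I else 1)
      (by intro a; by_cases ha : a = m <;> simp [ha]) i j k l
    rw [mul_comm (T _ _)] at this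
    exact mul_right_cancel₀ h0 this
  have h1 : Complex.I ≠ 1 := by simp [Complex.ext_iff]
  have h2 : (1 : ℂ) ≠ Complex.I := h1.symm
  have h3 : (-1 : ℂ) ≠ Complex.I := by simp [Complex.ext_iff]
  have h4 : (-1 : ℂ) ≠ 1 := by norm_num
  have h5 : Complex.I * Complex.I = -1 := Complex.I_mul_I
  have ki := key i
  have kj := key j
  have kk := key k
  have kl := key l
  grind

lemma rot_T {d : ℕ} (T : Matrix (Fin d × Fin d) (Fin d × Fin d) ℂ)
    (h : ∀ V ∈ Matrix.unitaryGroup (Fin d) ℂ, (V ⊗ₖ V) * T = T * (V ⊗ₖ V))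
    (i j : Fin d) (hij : i ≠ j) :
    T (i, i) (i, i) = T (i, j) (i, j) + T (i, j) (j, i) := by
  let w : Fin d → ℂ := fun a => if a = i then 1 else if a = j then 2 else 0
  have hw : ∑ x, w x * w x = 5 := by
    have : ∀ x, w x * w x = (if x = i then 1 else 0) + (if x = j then 4 else 0) := by
      intro x; simp only [w]; by_cases h1 : x = i
      · subst h1; simp [hij]
      · by_cases h2 : x = j
        · subst h2; simp [h1]; norm_num
        · simp [h1, h2]
    simp only [this, Finset.sum_add_distrib, Finset.sum_ite_eq', Finset.mem_univ, if_true]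
    norm_num
  let V : Matrix (Fin d) (Fin d) ℂ := 1 - (2 / 5 : ℂ) • Matrix.vecMulVec w w
  have hs : star V = V := by
    ext a b
    simp only [V, w, Matrix.star_apply, Matrix.sub_apply, Matrix.smul_apply, Matrix.vecMulVec_apply,
      Matrix.one_apply, smul_eq_mul, star_sub, star_mul']
    have c2 : (starRingEnd ℂ) 2 = 2 := Complex.conj_ofNat 2
    simp [apply_ite (starRingEnd ℂ), eq_comm, mul_comm, c2]
  have hV : V ∈ Matrix.unitaryGroup (Fin d) ℂ := by
    rw [Matrix.mem_unitaryGroup_iff, hs]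
    have h2 : Matrix.vecMulVec w w * Matrix.vecMulVec w w = (5 : ℂ) • Matrix.vecMulVec w w := by
      ext a b
      simp only [Matrix.mul_apply, Matrix.vecMulVec_apply, Matrix.smul_apply, smul_eq_mul]
      rw [← hw, Finset.sum_mul]
      exact Finset.sum_congr rfl fun x _ => by ring
    simp only [V, sub_mul, mul_sub, one_mul, mul_one, smul_mul_assoc, mul_smul_comm, h2, smul_smul]
    ext a b
    simp; ring
  have e := kron_conj T V (h V hV) i j i i
  have Vji : V j i = -4 / 5 := by
    simp [V, w, Matrix.vecMulVec_apply, Matrix.one_apply, hij, hij.symm]; norm_num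
  have Vii : V i i = 3 / 5 := by
    simp [V, w, Matrix.vecMulVec_apply, Matrix.one_apply, hij, hij.symm]; norm_num
  rw [Finset.sum_eq_single i, Finset.sum_eq_single i] at e
  rotate_left
  · intro b _ hb
    rw [supp_T T h _ _ _ _ (by grind), mul_zero]
  · simp
  · intro a _ ha
    exact Finset.sum_eq_zero fun b _ => by rw [supp_T T h _ _ _ _ (by grind), mul_zero]
  · simp
  have e2 : ∀ a b, T (i, j) (a, b) * (V a i * V b i) =
      (if a = i then if b = j then T (i, j) (i, j) * (V i i * V j i) else 0 else 0) +
      (if a = j then if b = i then T (i, j) (j, i) * (V i i * V j i) else 0 else 0) := by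
    intro a b
    by_cases h1 : a = i ∧ b = j
    · obtain ⟨rfl, rfl⟩ := h1; simp [hij]
    by_cases h2 : a = j ∧ b = i
    · obtain ⟨rfl, rfl⟩ := h2; simp [hij.symm, mul_comm]
    rw [supp_T T h _ _ _ _ (by grind), zero_mul]
    grind
  simp only [e2, Finset.sum_add_distrib, Finset.sum_ite_eq', Finset.mem_univ, if_true,
    Finset.sum_ite_irrel, Finset.sum_const_zero, Vji, Vii] at e
  linear_combination (-25 / 12 : ℂ) * e

lemma exists_perm {d : ℕ} (i j i' j' : Fin d) (h : i ≠ j) (h' : i' ≠ j') :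
    ∃ s : Equiv.Perm (Fin d), s i = i' ∧ s j = j' := by
  refine ⟨(Equiv.swap i i').trans (Equiv.swap (Equiv.swap i i' j) j'), ?_, ?_⟩
  · simp only [Equiv.trans_apply, Equiv.swap_apply_left]
    apply Equiv.swap_apply_of_ne_of_ne _ h'
    intro hh
    apply h
    apply (Equiv.swap i i').injective
    rw [← hh, Equiv.swap_apply_left]
  · simp

lemma commutant {d : ℕ} (hd : 2 ≤ d) (T : Matrix (Fin d × Fin d) (Fin d × Fin d) ℂ)
    (h : ∀ V ∈ Matrix.unitaryGroup (Fin d) ℂ, (V ⊗ₖ V) * T = T * (V ⊗ₖ V)) :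
    ∃ a b : ℂ, T = a • 1 + b • swapOp d := by
  let p : Fin d := ⟨0, by omega⟩
  let q : Fin d := ⟨1, by omega⟩
  have hpq : p ≠ q := by simp [p, q]
  refine ⟨T (p, q) (p, q), T (p, q) (q, p), ?_⟩
  ext ⟨i, j⟩ ⟨k, l⟩
  simp only [Matrix.add_apply, Matrix.smul_apply, Matrix.one_apply, swapOp, smul_eq_mul,
    Prod.mk.injEq]
  by_cases hij : i = j
  · subst hij
    by_cases hk : i = k ∧ i = l
    · obtain ⟨rfl, rfl⟩ := hk
      have := comm_perm T h (Equiv.swap p i) p p p p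
      rw [Equiv.swap_apply_left] at this
      rw [this, rot_T T h p q hpq]
      simp
    · rw [supp_T T h _ _ _ _ (by grind)]
      grind
  · obtain ⟨s, rfl, rfl⟩ := exists_perm p q i j hpq hij
    by_cases h1 : s p = k ∧ s q = l
    · obtain ⟨rfl, rfl⟩ := h1
      rw [comm_perm T h]
      simp [hpq]
    by_cases h2 : s p = l ∧ s q = k
    · obtain ⟨rfl, rfl⟩ := h2
      rw [comm_perm T h]
      simp [hpq]
    rw [supp_T T h _ _ _ _ (by grind)]
    grind

lemma swap_mul_apply {d : ℕ} (M : Matrix (Fin d × Fin d) (Fin d × Fin d) ℂ) (i j : Fin d) (q) :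
    (swapOp d * M) (i, j) q = M (j, i) q := by
  rw [Matrix.mul_apply, Finset.sum_eq_single (j, i)]
  · simp [swapOp]
  · rintro ⟨a, b⟩ _ hb
    simp only [swapOp]
    rw [if_neg (by grind), zero_mul]
  · simp

lemma mul_swap_apply {d : ℕ} (M : Matrix (Fin d × Fin d) (Fin d × Fin d) ℂ) (p) (k l : Fin d) :
    (M * swapOp d) p (k, l) = M p (l, k) := by
  rw [Matrix.mul_apply, Finset.sum_eq_single (l, k)]
  · simp [swapOp]
  · rintro ⟨a, b⟩ _ hb
    simp only [swapOp]
    rw [if_neg (by grind), mul_zero]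
  · simp

lemma swap_comm {d : ℕ} (V : Matrix (Fin d) (Fin d) ℂ) :
    swapOp d * (V ⊗ₖ V) = (V ⊗ₖ V) * swapOp d := by
  ext ⟨i, j⟩ ⟨k, l⟩
  rw [swap_mul_apply, mul_swap_apply]
  simp [mul_comm]

lemma trace_swap (d : ℕ) : (swapOp d).trace = d := by
  simp only [Matrix.trace, Matrix.diag_apply, swapOp, Fintype.sum_prod_type]
  have : ∀ x y : Fin d, (if x = y ∧ y = x then (1 : ℂ) else 0) = if x = y then 1 else 0 := by
    intro x y; congr 1; simp [eq_comm]
  simp [this]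

lemma swap_sq (d : ℕ) : swapOp d * swapOp d = 1 := by
  ext ⟨i, j⟩ ⟨k, l⟩
  rw [swap_mul_apply]
  simp only [swapOp, Matrix.one_apply, Prod.mk.injEq]
  grind

/-- The conjugation map. -/
noncomputable def twirlFun {d : ℕ} (M : Matrix (Fin d × Fin d) (Fin d × Fin d) ℂ)
    (U : Matrix.unitaryGroup (Fin d) ℂ) : Matrix (Fin d × Fin d) (Fin d × Fin d) ℂ :=
  ((U : Matrix (Fin d) (Fin d) ℂ) ⊗ₖ (U : Matrix (Fin d) (Fin d) ℂ)) * M *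
        ((U : Matrix (Fin d) (Fin d) ℂ) ⊗ₖ (U : Matrix (Fin d) (Fin d) ℂ))ᴴ

lemma kron_unit {d : ℕ} (V : Matrix (Fin d) (Fin d) ℂ) (hV : V ∈ Matrix.unitaryGroup (Fin d) ℂ) :
    (V ⊗ₖ V)ᴴ * (V ⊗ₖ V) = 1 := by
  rw [Matrix.mem_unitaryGroup_iff'] at hV
  rw [Matrix.conjTranspose_kronecker, ← Matrix.mul_kronecker_mul, ← Matrix.star_eq_conjTranspose,
    hV, Matrix.one_kronecker_one]

lemma twirl_cont {d : ℕ} (M : Matrix (Fin d × Fin d) (Fin d × Fin d) ℂ) :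
    Continuous (twirlFun M) := by
  have h1 : Continuous fun U : Matrix.unitaryGroup (Fin d) ℂ =>
      ((U : Matrix (Fin d) (Fin d) ℂ) ⊗ₖ (U : Matrix (Fin d) (Fin d) ℂ)) := by
    refine continuous_matrix fun p q => ?_
    simp only [Matrix.kroneckerMap_apply]
    exact (continuous_subtype_val.matrix_elem _ _).mul (continuous_subtype_val.matrix_elem _ _)
  exact (h1.matrix_mul continuous_const).matrix_mul h1.matrix_conjTranspose

lemma unitary_compact (d : ℕ) : CompactSpace (Matrix.unitaryGroup (Fin d) ℂ) := by
  apply isCompact_iff_compactSpace.mp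
  refine Metric.isCompact_of_isClosed_isBounded ?_ ?_
  · have : (Matrix.unitaryGroup (Fin d) ℂ : Set (Matrix (Fin d) (Fin d) ℂ)) =
      {A | A * Aᴴ = 1} := by
      ext A; exact Matrix.mem_unitaryGroup_iff
    rw [this]
    exact isClosed_eq (continuous_id.matrix_mul continuous_id.matrix_conjTranspose) continuous_const
  · refine (Metric.isBounded_closedBall (x := (0 : Matrix (Fin d) (Fin d) ℂ)) (r := 1)).subset ?_
    intro A hA
    rw [mem_closedBall_zero_iff]
    exact entrywise_sup_norm_bound_of_unitary hA

lemma lin_int {d : ℕ} (M : Matrix (Fin d × Fin d) (Fin d × Fin d) ℂ)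
    (μ : Measure (Matrix.unitaryGroup (Fin d) ℂ)) [IsProbabilityMeasure μ]
    {E : Type*} [NormedAddCommGroup E] [NormedSpace ℂ E] [CompleteSpace E]
    (L : Matrix (Fin d × Fin d) (Fin d × Fin d) ℂ →ₗ[ℂ] E) :
    L (∫ U, twirlFun M U ∂μ) = ∫ U, L (twirlFun M U) ∂μ := by
  have := unitary_compact d
  refine ((LinearMap.toContinuousLinearMap L).integral_comp_comm ?_).symm
  exact Continuous.integrable_of_hasCompactSupport (twirl_cont M)
    (HasCompactSupport.of_compactSpace _)

/-- **Second-moment Haar twirl (two-fold Schur–Weyl projection formula).**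
`∫ (U⊗U) M (U⊗U)ᴴ dμ(U) = α·I + β·S` with
`α = (d·tr M − tr(SM))/(d(d²−1))` and `β = (d·tr(SM) − tr M)/(d(d²−1))`. -/
theorem haar_twirl_two (d : ℕ) (hd : 2 ≤ d)
    (μ : Measure (Matrix.unitaryGroup (Fin d) ℂ))
    [μ.IsHaarMeasure] [IsProbabilityMeasure μ]
    (M : Matrix (Fin d × Fin d) (Fin d × Fin d) ℂ) :
    (∫ U, ((U : Matrix (Fin d) (Fin d) ℂ) ⊗ₖ (U : Matrix (Fin d) (Fin d) ℂ)) * M *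
        ((U : Matrix (Fin d) (Fin d) ℂ) ⊗ₖ (U : Matrix (Fin d) (Fin d) ℂ))ᴴ ∂μ)
      = ((((d : ℂ) * M.trace - (swapOp d * M).trace) / ((d : ℂ) * ((d : ℂ) ^ 2 - 1))) •
          (1 : Matrix (Fin d × Fin d) (Fin d × Fin d) ℂ)) +
        ((((d : ℂ) * (swapOp d * M).trace - M.trace) / ((d : ℂ) * ((d : ℂ) ^ 2 - 1))) •
          swapOp d) := by
  change ∫ U, twirlFun M U ∂μ = _
  set T := ∫ U, twirlFun M U ∂μ with hT
  have hinv : ∀ V ∈ Matrix.unitaryGroup (Fin d) ℂ, (V ⊗ₖ V) * T = T * (V ⊗ₖ V) := by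
    intro V hV
    have h1 : (V ⊗ₖ V) * T * (V ⊗ₖ V)ᴴ = T := by
      have := lin_int M μ ((LinearMap.mulRight ℂ (V ⊗ₖ V)ᴴ).comp (LinearMap.mulLeft ℂ (V ⊗ₖ V)))
      simp only [LinearMap.comp_apply, LinearMap.mulLeft_apply, LinearMap.mulRight_apply] at this
      rw [← hT] at this
      rw [this, hT, ← integral_mul_left_eq_self (twirlFun M) ⟨V, hV⟩]
      congr 1
      funext U
      simp only [twirlFun, Submonoid.coe_mul, Matrix.mul_kronecker_mul, Matrix.conjTranspose_mul,
        Matrix.mul_assoc]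
    conv_rhs => rw [← h1, Matrix.mul_assoc, kron_unit V hV, Matrix.mul_one]
  have htr : T.trace = M.trace := by
    have := lin_int M μ (Matrix.traceLinearMap _ ℂ ℂ)
    simp only [Matrix.traceLinearMap_apply] at this
    rw [hT, this]
    have h2 : ∀ U, (twirlFun M U).trace = M.trace := by
      intro U
      rw [twirlFun, Matrix.trace_mul_comm, ← Matrix.mul_assoc, kron_unit _ U.2, Matrix.one_mul]
    simp [h2]
  have hst : (swapOp d * T).trace = (swapOp d * M).trace := by
    have := lin_int M μ ((Matrix.traceLinearMap _ ℂ ℂ).comp (LinearMap.mulLeft ℂ (swapOp d)))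
    simp only [LinearMap.comp_apply, LinearMap.mulLeft_apply, Matrix.traceLinearMap_apply] at this
    rw [hT, this]
    have h2 : ∀ U, (swapOp d * twirlFun M U).trace = (swapOp d * M).trace := by
      intro U
      rw [twirlFun, ← Matrix.mul_assoc, ← Matrix.mul_assoc, swap_comm, Matrix.trace_mul_comm,
        Matrix.mul_assoc, ← Matrix.mul_assoc, kron_unit _ U.2, Matrix.one_mul]
    simp [h2]
  obtain ⟨a, b, hab⟩ := commutant hd T hinv
  rw [← htr, ← hst, hab]
  have t1 : (a • (1 : Matrix (Fin d × Fin d) (Fin d × Fin d) ℂ) + b • swapOp d).trace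
      = a * d ^ 2 + b * d := by
    simp [Matrix.trace_add, Matrix.trace_smul, trace_swap, Matrix.trace_one, sq]
  have t2 : (swapOp d * (a • (1 : Matrix (Fin d × Fin d) (Fin d × Fin d) ℂ) + b • swapOp d)).trace
      = a * d + b * d ^ 2 := by
    simp [Matrix.mul_add, Matrix.trace_add, Matrix.trace_smul, trace_swap, swap_sq,
      Matrix.trace_one, sq]
  rw [t1, t2]
  have d0 : (d : ℂ) ≠ 0 := by
    exact_mod_cast (by omega : d ≠ 0)
  have d1 : (d : ℂ) ^ 2 - 1 ≠ 0 := by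
    rw [sub_ne_zero]
    exact_mod_cast (by nlinarith : d ^ 2 ≠ 1)
  congr 2
  · field_simp
    ring
  · field_simp
    ring
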